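/- Let n ∈ ℕ, p⃗, q⃗ ∈ [1,∞]^n and α⃗ ∈ ℝⁿ. Then a measurable f : ℝⁿ → ℂ belongs to the associate space [Ė^{α⃗,p⃗}_{q⃗}(ℝⁿ)]' if and only if f ∈ Ė^{-α⃗,p⃗'}_{q⃗'}(ℝⁿ), and moreover ‖f‖_{[Ė^{α⃗,p⃗}_{q⃗}(ℝⁿ)]'} = ‖f‖_{Ė^{-α⃗,p⃗'}_{q⃗'}(ℝⁿ)}. -/

import Mathlib

open MeasureTheory ENNReal Filter

noncomputable section

/-- The dyadic annulus `R_k = (-2^k, 2^k) \ (-2^(k-1), 2^(k-1))` in `ℝ`. -/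
def herzRing (k : ℤ) : Set ℝ :=
  Set.Ioo (-(2 : ℝ) ^ k) ((2 : ℝ) ^ k) \ Set.Ioo (-(2 : ℝ) ^ (k - 1)) ((2 : ℝ) ^ (k - 1))

/-- The `L^q` "norm" (valued in `ℝ≥0∞`) of an `ℝ≥0∞`-valued function on a set `s ⊆ ℝ`,
with the usual modification when `q = ∞`. -/
def lqNormOn (q : ℝ≥0∞) (s : Set ℝ) (g : ℝ → ℝ≥0∞) : ℝ≥0∞ :=
  if q = ∞ then essSup (s.indicator g) volume
  else (∫⁻ x in s, g x ^ q.toReal) ^ (1 / q.toReal)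

/-- The `l^p` norm over `ℤ` of an `ℝ≥0∞`-valued sequence, with the usual modification
when `p = ∞`. -/
def lpZNorm (p : ℝ≥0∞) (a : ℤ → ℝ≥0∞) : ℝ≥0∞ :=
  if p = ∞ then ⨆ k, a k
  else (∑' k : ℤ, a k ^ p.toReal) ^ (1 / p.toReal)

/-- The one-dimensional Herz norm `K^{α,p}_q` of an `ℝ≥0∞`-valued function on `ℝ`. -/
def herzNorm1 (α : ℝ) (p q : ℝ≥0∞) (g : ℝ → ℝ≥0∞) : ℝ≥0∞ :=
  lpZNorm p fun k => ENNReal.ofReal ((2 : ℝ) ^ ((k : ℝ) * α)) * lqNormOn q (herzRing k) g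

/-- The mixed-norm Herz norm on `ℝⁿ` of an `ℝ≥0∞`-valued function: the Herz norm
`K^{α_1,p_1}_{q_1}` is applied in the first variable, then `K^{α_2,p_2}_{q_2}` in the
second variable, …, and finally `K^{α_n,p_n}_{q_n}` in the last variable. -/
def mixedHerzNormE : (n : ℕ) → (Fin n → ℝ) → (Fin n → ℝ≥0∞) → (Fin n → ℝ≥0∞) →
    ((Fin n → ℝ) → ℝ≥0∞) → ℝ≥0∞
  | 0, _, _, _, f => f fun i => i.elim0
  | n + 1, α, p, q, f =>
    herzNorm1 (α (Fin.last n)) (p (Fin.last n)) (q (Fin.last n)) fun xlast =>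
      mixedHerzNormE n (Fin.init α) (Fin.init p) (Fin.init q) fun y => f (Fin.snoc y xlast)

/-- The mixed-norm Herz norm `‖f‖_{Ė^{α,p}_q(ℝⁿ)}` of a complex-valued function on `ℝⁿ`. -/
def herzNormC (n : ℕ) (α : Fin n → ℝ) (p q : Fin n → ℝ≥0∞) (f : (Fin n → ℝ) → ℂ) : ℝ≥0∞ :=
  mixedHerzNormE n α p q fun x => (‖f x‖₊ : ℝ≥0∞)

/-- `I_m = (-2^m, -2^{-m}] ∪ [2^{-m}, 2^m)`. -/
def herzI (m : ℕ) : Set ℝ :=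
  Set.Ioc (-(2 : ℝ) ^ (m : ℤ)) (-(2 : ℝ) ^ (-(m : ℤ))) ∪
    Set.Ico ((2 : ℝ) ^ (-(m : ℤ))) ((2 : ℝ) ^ (m : ℤ))

/-- `A_m = I_m^n ⊆ ℝⁿ`. -/
def herzA (n m : ℕ) : Set (Fin n → ℝ) := Set.univ.pi fun _ => herzI m

/-- The class `H(ℝⁿ)` of simple functions built from finitely many pairwise disjoint
parallelepipeds contained in some `A_m`. -/
def IsHSimple (n : ℕ) (f : (Fin n → ℝ) → ℂ) : Prop :=
  ∃ (m N : ℕ) (a : Fin N → ℂ) (E : Fin N → Fin n → Set ℝ),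
    (∀ k i, MeasurableSet (E k i)) ∧
    (∀ k, Set.univ.pi (E k) ⊆ herzA n m) ∧
    (Pairwise fun k l => Disjoint (Set.univ.pi (E k)) (Set.univ.pi (E l))) ∧
    f = fun x => ∑ k, (Set.univ.pi (E k)).indicator (fun _ => a k) x

/-- The Euclidean ball `B(x,r)` in `ℝⁿ`. -/
def eucBall (n : ℕ) (x : Fin n → ℝ) (r : ℝ) : Set (Fin n → ℝ) :=
  {y | ∑ i, (y i - x i) ^ 2 < r ^ 2}

/-- The (uncentered) maximal operator in the `k`-th variable. -/
def maxVar (n : ℕ) (k : Fin n) (g : (Fin n → ℝ) → ℝ≥0∞) : (Fin n → ℝ) → ℝ≥0∞ :=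
  fun x => ⨆ (a : ℝ) (b : ℝ) (_ : x k ∈ Set.Ioo a b),
    (volume (Set.Ioo a b))⁻¹ * ∫⁻ y in Set.Ioo a b, g (Function.update x k y)

/-- The centered Hardy–Littlewood maximal operator on `ℝⁿ`. -/
def centeredMax (n : ℕ) (g : (Fin n → ℝ) → ℝ≥0∞) : (Fin n → ℝ) → ℝ≥0∞ :=
  fun x => ⨆ (r : ℝ) (_ : 0 < r),
    (volume (eucBall n x r))⁻¹ * ∫⁻ y in eucBall n x r, g y

/-- The composition `M_n ∘ ⋯ ∘ M_1` of the maximal operators in each variable. -/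
def iteratedMax (n : ℕ) (g : (Fin n → ℝ) → ℝ≥0∞) : (Fin n → ℝ) → ℝ≥0∞ :=
  (List.ofFn fun k : Fin n => maxVar n k).foldl (fun h F => F h) g

/-- The iterated maximal operator `ℳ_t(f) = [M_n ⋯ M_1(|f|^t)]^{1/t}`. -/
def iterMaxPow (n : ℕ) (t : ℝ) (f : (Fin n → ℝ) → ℂ) : (Fin n → ℝ) → ℝ≥0∞ :=
  fun x => iteratedMax n (fun y => (‖f y‖₊ : ℝ≥0∞) ^ t) x ^ (1 / t)

/-- The `l^r`-Herz type mixed norm of a sequence of functions on `ℝⁿ`. -/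
def herzSeqNorm (n : ℕ) (r : ℝ≥0∞) (α : Fin n → ℝ) (p q : Fin n → ℝ≥0∞)
    (F : ℤ → (Fin n → ℝ) → ℂ) : ℝ≥0∞ :=
  mixedHerzNormE n α p q fun x => lpZNorm r fun j => (‖F j x‖₊ : ℝ≥0∞)

/-- `N` is a ball quasi-Banach function norm on (nonnegative extended-real-valued)
measurable functions on `ℝⁿ`. -/
def IsBQBFNorm (n : ℕ) (N : ((Fin n → ℝ) → ℝ≥0∞) → ℝ≥0∞) : Prop :=
  (∀ f : (Fin n → ℝ) → ℝ≥0∞, Measurable f → N f = 0 → f =ᵐ[volume] 0) ∧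
  (∀ f g : (Fin n → ℝ) → ℝ≥0∞, Measurable f → Measurable g →
    (∀ᵐ x ∂volume, g x ≤ f x) → N g ≤ N f) ∧
  (∀ (fm : ℕ → (Fin n → ℝ) → ℝ≥0∞) (f : (Fin n → ℝ) → ℝ≥0∞),
    (∀ m, Measurable (fm m)) → Measurable f →
    (∀ᵐ x ∂volume, Monotone (fun m => fm m x) ∧
      Tendsto (fun m => fm m x) atTop (nhds (f x))) →
    Monotone (fun m => N (fm m)) ∧ Tendsto (fun m => N (fm m)) atTop (nhds (N f))) ∧
  (∀ (x : Fin n → ℝ) (r : ℝ), 0 < r →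
    N ((eucBall n x r).indicator fun _ => (1 : ℝ≥0∞)) ≠ ∞)

/-- `N` is a ball Banach function norm: a ball quasi-Banach function norm that moreover
satisfies the triangle inequality and locally dominates the `L¹` norm. -/
def IsBallBanachNorm (n : ℕ) (N : ((Fin n → ℝ) → ℝ≥0∞) → ℝ≥0∞) : Prop :=
  IsBQBFNorm n N ∧
  (∀ f g : (Fin n → ℝ) → ℝ≥0∞, Measurable f → Measurable g → N (f + g) ≤ N f + N g) ∧
  (∀ (x : Fin n → ℝ) (r : ℝ), 0 < r → ∃ C : ℝ≥0∞, 0 < C ∧ C ≠ ∞ ∧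
    ∀ f : (Fin n → ℝ) → ℝ≥0∞, Measurable f → (∫⁻ y in eucBall n x r, f y) ≤ C * N f)

/-- The associate (Köthe dual) norm of a function norm `N`. -/
def assocNormOf (n : ℕ) (N : ((Fin n → ℝ) → ℝ≥0∞) → ℝ≥0∞)
    (f : (Fin n → ℝ) → ℝ≥0∞) : ℝ≥0∞ :=
  ⨆ (g : (Fin n → ℝ) → ℝ≥0∞) (_ : Measurable g) (_ : N g = 1), ∫⁻ x, f x * g x

/-- The `θ`-convexification of a function norm: `‖f‖_{X^θ} = ‖|f|^θ‖_X^{1/θ}`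
(here stated with `θ` in place of `1/p`, so `X^{1/p}` is `convexPow n (1/p) N`). -/
def convexPow (n : ℕ) (θ : ℝ) (N : ((Fin n → ℝ) → ℝ≥0∞) → ℝ≥0∞)
    (f : (Fin n → ℝ) → ℝ≥0∞) : ℝ≥0∞ :=
  N (fun x => f x ^ θ) ^ (1 / θ)

/-- The associate space norm of the mixed-norm Herz space, for complex-valued functions. -/
def herzAssocNormC (n : ℕ) (α : Fin n → ℝ) (p q : Fin n → ℝ≥0∞)
    (f : (Fin n → ℝ) → ℂ) : ℝ≥0∞ :=
  ⨆ (g : (Fin n → ℝ) → ℂ) (_ : Measurable g) (_ : herzNormC n α p q g = 1),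
    ∫⁻ x, (‖f x * g x‖₊ : ℝ≥0∞)

/-!
Duality is proved uniformly in a parameter: the norms and the functions depend measurably on `t`,
and the supremum defining the associate norm has to be almost attained by functions that are
jointly measurable in `t` and the variable. This form of duality survives iteration:
near-extremizers for the outer norm, applied to the inner dual norms, are multiplied by
near-extremizers for the inner norm, whose parameter now includes the outer variable.

For `L^p` such near-extremizers are the powers from the equality case of Hölder's inequality, or
normalized indicators of superlevel sets when the dual exponent is `∞`. The Herz norm on `ℝ` is a
mixed norm, a weighted `ℓ^p` norm of `L^q` norms over the dyadic rings, and the mixed-norm Herz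
norm iterates it, one variable at a time.
-/

section

open ProbabilityTheory

variable {T X Y Z ι : Type*} [MeasurableSpace T] [MeasurableSpace X] [MeasurableSpace Y]
  [MeasurableSpace Z]

/-- A family `G` of functions in the unit ball of `N` that norms `F` with respect to `N'`, with
everything depending measurably on a parameter `t : T`: the fibre over `t` carries the measure
`κ t` and the function norms `N t` and `N' t`. -/
structure IsNorming (κ : Kernel T Y) (N N' : T → (Y → ℝ≥0∞) → ℝ≥0∞) (F : T × Y → ℝ≥0∞)
    (G : ι → T × Y → ℝ≥0∞) : Prop where
  measurable : ∀ i, Measurable (G i)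
  norm_le_one : ∀ i t, N t (fun y ↦ G i (t, y)) ≤ 1
  le_iSup : ∀ t, N' t (fun y ↦ F (t, y)) ≤ ⨆ i, ∫⁻ y, F (t, y) * G i (t, y) ∂κ t

/-- Two parametrized function norms `N` and `N'` such that `N' t` is the associate norm of `N t`
with respect to `κ t`, with the supremum defining it almost attained by functions that are jointly
measurable in the parameter and the variable. -/
structure IsAssociatePair (κ : Kernel T Y) (N N' : T → (Y → ℝ≥0∞) → ℝ≥0∞) : Prop where
  mono_ae : ∀ t f g, f ≤ᵐ[κ t] g → N t f ≤ N t g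
  const_mul : ∀ t (c : ℝ≥0∞) f, Measurable f → N t (fun y ↦ c * f y) = c * N t f
  measurable_norm : ∀ F : T × Y → ℝ≥0∞, Measurable F → Measurable fun t ↦ N t fun y ↦ F (t, y)
  measurable_dual : ∀ F : T × Y → ℝ≥0∞, Measurable F → Measurable fun t ↦ N' t fun y ↦ F (t, y)
  holder : ∀ t f g, Measurable f → Measurable g → ∫⁻ y, f y * g y ∂κ t ≤ N' t f * N t g
  exists_isNorming : ∀ F : T × Y → ℝ≥0∞, Measurable F →
    ∃ G : ℕ → T × Y → ℝ≥0∞, IsNorming κ N N' F G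

section IsNorming

variable {κ : Kernel T Y} {N N' : T → (Y → ℝ≥0∞) → ℝ≥0∞} {F : T × Y → ℝ≥0∞}

theorem IsNorming.exists_nat [Countable ι] [Nonempty ι] {G : ι → T × Y → ℝ≥0∞}
    (hG : IsNorming κ N N' F G) : ∃ G : ℕ → T × Y → ℝ≥0∞, IsNorming κ N N' F G := by
  obtain ⟨e, he⟩ := exists_surjective_nat ι
  refine ⟨fun k ↦ G (e k), fun k ↦ hG.measurable _, fun k ↦ hG.norm_le_one _, fun t ↦ ?_⟩
  rw [he.iSup_comp (g := fun i ↦ ∫⁻ y, F (t, y) * G i (t, y) ∂κ t)]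
  exact hG.le_iSup t

theorem exists_measurable_eq_partialSups {A : ℕ → T → ℝ≥0∞} (hA : ∀ k, Measurable (A k)) (m : ℕ) :
    ∃ j : T → ℕ, Measurable j ∧ ∀ t, A (j t) t = partialSups (fun k ↦ A k t) m := by
  classical
  have attained (t : T) : ∃ k, A k t = partialSups (fun k ↦ A k t) m := by
    obtain ⟨k, -, hk⟩ := exists_partialSups_eq (fun k ↦ A k t) m
    exact ⟨k, hk.symm⟩
  refine ⟨fun t ↦ Nat.find (attained t), measurable_find attained fun k ↦ ?_,
    fun t ↦ Nat.find_spec (attained t)⟩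
  refine measurableSet_eq_fun (hA k) ?_
  simp only [partialSups_eq_sup'_range]
  exact Finset.measurable_range_sup'' fun k _ ↦ hA k

theorem IsNorming.exists_monotone [IsSFiniteKernel κ] {G : ℕ → T × Y → ℝ≥0∞}
    (hG : IsNorming κ N N' F G) (hF : Measurable F) :
    ∃ G : ℕ → T × Y → ℝ≥0∞, IsNorming κ N N' F G ∧
      ∀ t, Monotone fun k ↦ ∫⁻ y, F (t, y) * G k (t, y) ∂κ t := by
  let A (k : ℕ) (t : T) : ℝ≥0∞ := ∫⁻ y, F (t, y) * G k (t, y) ∂κ t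
  have hA (k : ℕ) : Measurable (A k) :=
    (hF.mul (hG.measurable k)).lintegral_kernel_prod_right'
  choose j hj hjA using exists_measurable_eq_partialSups hA
  have pairing_eq (m : ℕ) (t : T) :
      ∫⁻ y, F (t, y) * G (j m t) (t, y) ∂κ t = partialSups (fun k ↦ A k t) m := hjA m t
  refine ⟨fun m z ↦ G (j m z.1) z, ⟨fun m ↦ ?_, fun m t ↦ hG.norm_le_one (j m t) t, fun t ↦ ?_⟩,
    fun t ↦ ?_⟩
  · have joint : Measurable fun z : ℕ × (T × Y) ↦ G z.1 z.2 :=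
      measurable_from_prod_countable_right hG.measurable
    exact joint.comp (((hj m).comp measurable_fst).prodMk measurable_id)
  · simp only [pairing_eq, iSup_partialSups_eq]
    exact hG.le_iSup t
  · simp only [pairing_eq]
    exact (partialSups _).monotone

end IsNorming

section Cutoff

variable {Ω : Type*} {S : ℕ → Set Ω} {f : Ω → ℝ≥0∞}

/-- The truncation of `f` to the set `S m` and to height `m`; it increases to `f` when the sets
`S m` increase to the whole space. -/
def cutoff (S : ℕ → Set Ω) (f : Ω → ℝ≥0∞) (m : ℕ) : Ω → ℝ≥0∞ :=
  (S m).indicator fun y ↦ min (f y) m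

theorem cutoff_le (m : ℕ) (y : Ω) : cutoff S f m y ≤ f y :=
  (Set.indicator_le_self (S m) _ y).trans (min_le_left _ _)

theorem cutoff_le_natCast (m : ℕ) (y : Ω) : cutoff S f m y ≤ m :=
  (Set.indicator_le_self (S m) _ y).trans (min_le_right _ _)

theorem monotone_cutoff (hS : Monotone S) : Monotone (cutoff S f) := by
  intro a b hab y
  refine (Set.indicator_le_indicator_of_subset (hS hab) (fun _ ↦ zero_le) y).trans ?_
  refine Set.indicator_le_indicator ?_
  gcongr

theorem iSup_cutoff (hS : Monotone S) (hU : ⋃ m, S m = Set.univ) (y : Ω) :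
    ⨆ m, cutoff S f m y = f y := by
  obtain ⟨k, hk⟩ := Set.mem_iUnion.1 (hU.ge (Set.mem_univ y))
  refine le_antisymm (iSup_le fun m ↦ cutoff_le m y) ?_
  calc f y = ⨆ m : ℕ, min (f y) m := by
        rw [← inf_iSup_eq, ENNReal.iSup_natCast, inf_top_eq]
    _ ≤ ⨆ m, cutoff S f m y := iSup_le fun m ↦ le_iSup_of_le (max m k) ?_
  rw [cutoff, Set.indicator_of_mem (hS (le_max_right m k) hk)]
  gcongr
  exact le_max_left m k

theorem measurable_cutoff [MeasurableSpace Ω] (hS : ∀ m, MeasurableSet (S m)) (hf : Measurable f)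
    (m : ℕ) : Measurable (cutoff S f m) :=
  (hf.min measurable_const).indicator (hS m)

theorem lintegral_cutoff_rpow_ne_top [MeasurableSpace Ω] {μ : Measure Ω} {m : ℕ} {r : ℝ}
    (hr : 0 < r) (hS : MeasurableSet (S m)) (hfin : μ (S m) ≠ ∞) :
    ∫⁻ y, cutoff S f m y ^ r ∂μ ≠ ∞ := by
  have le_indicator (y : Ω) :
      cutoff S f m y ^ r ≤ (S m).indicator (fun _ ↦ (m : ℝ≥0∞) ^ r) y := by
    by_cases hy : y ∈ S m
    · rw [Set.indicator_of_mem hy]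
      exact ENNReal.rpow_le_rpow (cutoff_le_natCast m y) hr.le
    · simp [cutoff, hy, hr]
  refine ne_top_of_le_ne_top ?_ (lintegral_mono le_indicator)
  rw [lintegral_indicator_const hS]
  exact ENNReal.mul_ne_top (ENNReal.rpow_ne_top_of_nonneg hr.le (ENNReal.natCast_ne_top m)) hfin

end Cutoff

section Lp

theorem eLpNorm_const_mul_ennreal (p : ℝ≥0∞) (μ : Measure Y) (c : ℝ≥0∞) {f : Y → ℝ≥0∞}
    (hf : AEMeasurable f μ) : eLpNorm (fun y ↦ c * f y) p μ = c * eLpNorm f p μ := by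
  rcases eq_or_ne p 0 with rfl | hp0
  · simp
  rcases eq_or_ne p ∞ with rfl | hp
  · simp only [eLpNorm_exponent_top, eLpNormEssSup_eq_essSup_enorm, enorm_eq_self,
      ENNReal.essSup_const_mul]
  have hpos : 0 < p.toReal := ENNReal.toReal_pos hp0 hp
  simp only [eLpNorm_eq_lintegral_rpow_enorm_toReal hp0 hp, enorm_eq_self,
    ENNReal.mul_rpow_of_nonneg _ _ hpos.le]
  rw [lintegral_const_mul'' _ (hf.pow_const _), ENNReal.mul_rpow_of_nonneg _ _ (by positivity),
    ← ENNReal.rpow_mul, mul_one_div_cancel hpos.ne', ENNReal.rpow_one]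

theorem lintegral_mul_le_eLpNorm_mul_eLpNorm (p q : ℝ≥0∞) [ENNReal.HolderConjugate p q]
    (μ : Measure Y) {f g : Y → ℝ≥0∞} (hf : AEMeasurable f μ) (hg : AEMeasurable g μ) :
    ∫⁻ y, f y * g y ∂μ ≤ eLpNorm f p μ * eLpNorm g q μ := by
  have essSup_mul_lintegral {f g : Y → ℝ≥0∞} (hg : AEMeasurable g μ) :
      ∫⁻ y, f y * g y ∂μ ≤ eLpNorm f ∞ μ * eLpNorm g 1 μ := by
    simp only [eLpNorm_exponent_top, eLpNormEssSup_eq_essSup_enorm, eLpNorm_one_eq_lintegral_enorm,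
      enorm_eq_self]
    rw [← lintegral_const_mul'' _ hg]
    refine lintegral_mono_ae ?_
    filter_upwards [ENNReal.ae_le_essSup (μ := μ) f] with y hy using by gcongr
  rcases eq_or_ne p ∞ with rfl | hp
  · obtain rfl : q = 1 := (ENNReal.HolderConjugate.eq_top_iff_eq_one ∞ q).1 rfl
    exact essSup_mul_lintegral hg
  rcases eq_or_ne q ∞ with rfl | hq
  · obtain rfl : p = 1 := (ENNReal.HolderConjugate.eq_top_iff_eq_one ∞ p).1 rfl
    simpa only [mul_comm] using essSup_mul_lintegral (f := g) hf
  simp only [eLpNorm_eq_lintegral_rpow_enorm_toReal (ENNReal.HolderConjugate.ne_zero p q) hp,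
    eLpNorm_eq_lintegral_rpow_enorm_toReal (ENNReal.HolderConjugate.ne_zero q p) hq, enorm_eq_self]
  exact ENNReal.lintegral_mul_le_Lp_mul_Lq μ (ENNReal.HolderConjugate.toReal_of_ne_top hp hq) hf hg

theorem essSup_le_iff_measure_eq_zero {μ : Measure Y} {f : Y → ℝ≥0∞} {c : ℝ≥0∞} :
    essSup f μ ≤ c ↔ μ {y | c < f y} = 0 := by
  have ae_le_iff : (∀ᵐ y ∂μ, f y ≤ c) ↔ μ {y | c < f y} = 0 := by simp only [ae_iff, not_le]
  rw [← ae_le_iff]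
  exact ⟨fun h ↦ (ENNReal.ae_le_essSup f).mono fun y hy ↦ hy.trans h, essSup_le_of_ae_le c⟩

theorem measurable_eLpNorm_kernel (p : ℝ≥0∞) (κ : Kernel T Y) [IsSFiniteKernel κ]
    {F : T × Y → ℝ≥0∞} (hF : Measurable F) :
    Measurable fun t ↦ eLpNorm (fun y ↦ F (t, y)) p (κ t) := by
  rcases eq_or_ne p 0 with rfl | hp0
  · simp only [eLpNorm_exponent_zero, measurable_const]
  rcases eq_or_ne p ∞ with rfl | hp
  · simp only [eLpNorm_exponent_top, eLpNormEssSup_eq_essSup_enorm, enorm_eq_self]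
    refine measurable_of_Iic fun c ↦ ?_
    simp only [Set.preimage, Set.mem_Iic, essSup_le_iff_measure_eq_zero]
    exact measurableSet_eq_fun
      (Kernel.measurable_kernel_prodMk_left (measurableSet_lt measurable_const hF))
      measurable_const
  simp only [eLpNorm_eq_lintegral_rpow_enorm_toReal hp0 hp, enorm_eq_self]
  exact (hF.pow_const p.toReal).lintegral_kernel_prod_right'.pow_const _

theorem iSup_rpow_of_pos {ι : Sort*} {r : ℝ} (hr : 0 < r) (a : ι → ℝ≥0∞) :
    (⨆ i, a i) ^ r = ⨆ i, a i ^ r :=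
  (ENNReal.orderIsoRpow r hr).map_iSup a

theorem lintegral_iSup_rpow_rpow {r : ℝ} (hr : 0 < r) (μ : Measure Y) {f : ℕ → Y → ℝ≥0∞}
    (hf : ∀ m, Measurable (f m)) (hmono : Monotone f) :
    (∫⁻ y, (⨆ m, f m y) ^ r ∂μ) ^ (1 / r) = ⨆ m, (∫⁻ y, f m y ^ r ∂μ) ^ (1 / r) := by
  simp only [iSup_rpow_of_pos hr]
  rw [lintegral_iSup (fun m ↦ (hf m).pow_const r)
    fun _ _ hmn y ↦ ENNReal.rpow_le_rpow (hmono hmn y) hr.le,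
    iSup_rpow_of_pos (one_div_pos.2 hr)]

/-- The extremizer `f ^ (r - 1) / ‖f‖_r ^ (r - 1)` in Hölder's inequality for the conjugate
exponents `r` and `s`; when `∫ f ^ r = 0` it is `∞ * f ^ (r - 1)`, which vanishes almost
everywhere. -/
def holderExtremizer (r s : ℝ) (μ : Measure Y) (f : Y → ℝ≥0∞) (y : Y) : ℝ≥0∞ :=
  (∫⁻ x, f x ^ r ∂μ) ^ (-(1 / s)) * f y ^ (r - 1)

theorem lintegral_holderExtremizer_rpow_le_one {r s : ℝ} (hrs : r.HolderConjugate s)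
    (μ : Measure Y) {f : Y → ℝ≥0∞} (hf : Measurable f) :
    ∫⁻ y, holderExtremizer r s μ f y ^ s ∂μ ≤ 1 := by
  simp only [holderExtremizer, ENNReal.mul_rpow_of_nonneg _ _ hrs.symm.nonneg, ← ENNReal.rpow_mul,
    hrs.sub_one_mul_conj, neg_mul, one_div, inv_mul_cancel₀ hrs.symm.ne_zero, ENNReal.rpow_neg_one]
  rw [lintegral_const_mul _ (hf.pow_const r)]
  exact ENNReal.inv_mul_le_one _

theorem lintegral_mul_holderExtremizer {r s : ℝ} (hrs : r.HolderConjugate s) (μ : Measure Y)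
    {f : Y → ℝ≥0∞} (hf : Measurable f) (hfin : ∫⁻ y, f y ^ r ∂μ ≠ ∞) :
    ∫⁻ y, f y * holderExtremizer r s μ f y ∂μ = (∫⁻ y, f y ^ r ∂μ) ^ (1 / r) := by
  set I := ∫⁻ y, f y ^ r ∂μ with hI
  have mul_extremizer (y : Y) : f y * holderExtremizer r s μ f y = I ^ (-(1 / s)) * f y ^ r := by
    have : f y * f y ^ (r - 1) = f y ^ r := by
      conv_lhs => rw [← ENNReal.rpow_one (f y), ← ENNReal.rpow_mul, one_mul,
        ← ENNReal.rpow_add_of_nonneg _ _ zero_le_one hrs.sub_one_pos.le, add_sub_cancel]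
    rw [holderExtremizer, mul_left_comm, this]
  simp only [mul_extremizer]
  rw [lintegral_const_mul _ (hf.pow_const r), ← hI]
  rcases eq_or_ne I 0 with h0 | h0
  · rw [h0, mul_zero, ENNReal.zero_rpow_of_pos hrs.one_div_pos]
  · have exponent : 1 / r = -(1 / s) + 1 := by
      have := hrs.inv_add_inv_eq_one
      simp only [one_div]; linarith
    rw [exponent, ENNReal.rpow_add _ _ h0 hfin, ENNReal.rpow_one]

/-- The indicator of `E` normalized in `L¹(μ)`. -/
def normalizedIndicator (μ : Measure Y) (E : Set Y) : Y → ℝ≥0∞ :=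
  E.indicator fun _ ↦ (μ E)⁻¹

theorem lintegral_normalizedIndicator_le_one (μ : Measure Y) {E : Set Y} (hE : MeasurableSet E) :
    ∫⁻ y, normalizedIndicator μ E y ∂μ ≤ 1 := by
  rw [normalizedIndicator, lintegral_indicator_const hE]
  exact ENNReal.inv_mul_le_one _

theorem le_lintegral_mul_normalizedIndicator {μ : Measure Y} {E : Set Y} (hE : MeasurableSet E)
    (h0 : μ E ≠ 0) (hfin : μ E ≠ ∞) {f : Y → ℝ≥0∞} {c : ℝ≥0∞} (hc : ∀ y ∈ E, c ≤ f y) :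
    c ≤ ∫⁻ y, f y * normalizedIndicator μ E y ∂μ := by
  calc c = ∫⁻ y, E.indicator (fun _ ↦ c * (μ E)⁻¹) y ∂μ := by
        rw [lintegral_indicator_const hE, mul_assoc, ENNReal.inv_mul_cancel h0 hfin, mul_one]
    _ ≤ ∫⁻ y, f y * normalizedIndicator μ E y ∂μ := by
        refine lintegral_mono fun y ↦ ?_
        by_cases hy : y ∈ E
        · simp only [normalizedIndicator, Set.indicator_of_mem hy]
          gcongr
          exact hc y hy
        · simp [normalizedIndicator, hy]

variable {κ : Kernel T Y} [IsSFiniteKernel κ] {S : ℕ → Set Y} {F : T × Y → ℝ≥0∞}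

theorem isNorming_holderExtremizer {r s : ℝ} (hrs : r.HolderConjugate s)
    (hS : ∀ m, MeasurableSet (S m)) (hmono : Monotone S) (hU : ⋃ m, S m = Set.univ)
    (hfin : ∀ t m, κ t (S m) ≠ ∞) (hF : Measurable F) :
    IsNorming κ (fun t f ↦ (∫⁻ y, f y ^ s ∂κ t) ^ (1 / s))
      (fun t f ↦ (∫⁻ y, f y ^ r ∂κ t) ^ (1 / r)) F
      fun m z ↦ holderExtremizer r s (κ z.1) (cutoff S (fun y ↦ F (z.1, y)) m) z.2 := by
  have measurable_fiber (t : T) : Measurable fun y ↦ F (t, y) := hF.comp measurable_prodMk_left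
  have measurable_cutoff_fiber (t : T) (m : ℕ) : Measurable (cutoff S (fun y ↦ F (t, y)) m) :=
    measurable_cutoff hS (measurable_fiber t) m
  refine ⟨fun m ↦ ?_, fun m t ↦ ?_, fun t ↦ ?_⟩
  · have joint : Measurable fun z : T × Y ↦ cutoff S (fun y ↦ F (z.1, y)) m z.2 :=
      measurable_cutoff (S := fun m ↦ Prod.snd ⁻¹' S m) (fun m ↦ measurable_snd (hS m)) hF m
    have power : Measurable fun t ↦ ∫⁻ y, cutoff S (fun y ↦ F (t, y)) m y ^ r ∂κ t :=
      (joint.pow_const r).lintegral_kernel_prod_right'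
    exact ((power.comp measurable_fst).pow_const _).mul (joint.pow_const _)
  · exact ENNReal.rpow_le_one
      (lintegral_holderExtremizer_rpow_le_one hrs (κ t) (measurable_cutoff_fiber t m))
      hrs.symm.one_div_nonneg
  · calc (∫⁻ y, F (t, y) ^ r ∂κ t) ^ (1 / r)
        = ⨆ m, (∫⁻ y, cutoff S (fun y ↦ F (t, y)) m y ^ r ∂κ t) ^ (1 / r) := by
          rw [← lintegral_iSup_rpow_rpow hrs.pos _ (measurable_cutoff_fiber t)
            (monotone_cutoff hmono)]
          simp only [iSup_cutoff hmono hU]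
      _ ≤ _ := by
          refine iSup_mono fun m ↦ ?_
          rw [← lintegral_mul_holderExtremizer hrs (κ t) (measurable_cutoff_fiber t m)
            (lintegral_cutoff_rpow_ne_top hrs.pos (hS m) (hfin t m))]
          exact lintegral_mono fun y ↦ by gcongr; exact cutoff_le m y

theorem isNorming_normalizedIndicator (hS : ∀ m, MeasurableSet (S m)) (hU : ⋃ m, S m = Set.univ)
    (hfin : ∀ t m, κ t (S m) ≠ ∞) (hF : Measurable F) :
    IsNorming κ (fun t f ↦ ∫⁻ y, f y ∂κ t) (fun t f ↦ essSup f (κ t)) F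
      fun (i : ℚ × ℕ) z ↦
        normalizedIndicator (κ z.1) ({y | ENNReal.ofReal i.1 < F (z.1, y)} ∩ S i.2) z.2 := by
  let E (i : ℚ × ℕ) (t : T) : Set Y := {y | ENNReal.ofReal i.1 < F (t, y)} ∩ S i.2
  have measurableSet_joint (i : ℚ × ℕ) : MeasurableSet {z : T × Y | z.2 ∈ E i z.1} :=
    (measurableSet_lt measurable_const hF).inter (measurable_snd (hS i.2))
  have hE (i : ℚ × ℕ) (t : T) : MeasurableSet (E i t) :=
    measurable_prodMk_left (measurableSet_joint i)
  refine ⟨fun i ↦ ?_, fun i t ↦ lintegral_normalizedIndicator_le_one (κ t) (hE i t), fun t ↦ ?_⟩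
  · have measure_fiber : Measurable fun t ↦ κ t (E i t) :=
      Kernel.measurable_kernel_prodMk_left (measurableSet_joint i)
    exact (measure_fiber.inv.comp measurable_fst).indicator (measurableSet_joint i)
  refine le_of_forall_lt fun c hc ↦ ?_
  obtain ⟨r, -, hcr, hr⟩ := ENNReal.lt_iff_exists_rat_btwn.1 hc
  have iUnion_eq : {y | ENNReal.ofReal r < F (t, y)} = ⋃ m, E (r, m) t := by
    simp only [E, ← Set.inter_iUnion, hU, Set.inter_univ]
  obtain ⟨m, hm⟩ : ∃ m, κ t (E (r, m) t) ≠ 0 := by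
    by_contra! null
    refine hr.not_ge (essSup_le_iff_measure_eq_zero.2 ?_)
    exact iUnion_eq ▸ measure_iUnion_null null
  have fiber_ne_top : κ t (E (r, m) t) ≠ ∞ := measure_ne_top_of_subset Set.inter_subset_right
    (hfin t m)
  refine hcr.trans_le (le_iSup_of_le (r, m) ?_)
  exact le_lintegral_mul_normalizedIndicator (hE (r, m) t) hm fiber_ne_top fun y hy ↦ hy.1.le

theorem isAssociatePair_eLpNorm {μ : Measure Y} [SigmaFinite μ] (hκ : ∀ t, κ t ≤ μ)
    (p q : ℝ≥0∞) [ENNReal.HolderConjugate p q] :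
    IsAssociatePair κ (fun t f ↦ eLpNorm f p (κ t)) (fun t f ↦ eLpNorm f q (κ t)) where
  mono_ae t f g hfg := eLpNorm_mono_enorm_ae hfg
  const_mul t c f hf := eLpNorm_const_mul_ennreal p (κ t) c hf.aemeasurable
  measurable_norm F hF := measurable_eLpNorm_kernel p κ hF
  measurable_dual F hF := measurable_eLpNorm_kernel q κ hF
  holder t f g hf hg := by
    have : ENNReal.HolderConjugate q p := .symm
    exact lintegral_mul_le_eLpNorm_mul_eLpNorm q p (κ t) hf.aemeasurable hg.aemeasurable
  exists_isNorming F hF := by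
    have hS := measurableSet_spanningSets μ
    have hU := iUnion_spanningSets μ
    have hfin (t : T) (m : ℕ) : κ t (spanningSets μ m) ≠ ∞ :=
      ((hκ t _).trans_lt (measure_spanningSets_lt_top μ m)).ne
    rcases eq_or_ne q ∞ with rfl | hq
    · obtain rfl : p = 1 := (ENNReal.HolderConjugate.eq_top_iff_eq_one ∞ p).1 rfl
      simpa only [eLpNorm_one_eq_lintegral_enorm, eLpNorm_exponent_top,
        eLpNormEssSup_eq_essSup_enorm, enorm_eq_self]
        using (isNorming_normalizedIndicator hS hU hfin hF).exists_nat
    rcases eq_or_ne p ∞ with rfl | hp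
    · obtain rfl : q = 1 := (ENNReal.HolderConjugate.eq_top_iff_eq_one ∞ q).1 rfl
      refine ⟨fun _ _ ↦ 1, fun _ ↦ measurable_const, fun _ t ↦ ?_, fun t ↦ ?_⟩
      · simp only [eLpNorm_exponent_top, eLpNormEssSup_eq_essSup_enorm, enorm_eq_self]
        exact essSup_le_of_ae_le 1 (ae_of_all _ fun _ ↦ le_rfl)
      · simp [eLpNorm_one_eq_lintegral_enorm]
    · have hrs : q.toReal.HolderConjugate p.toReal :=
        (ENNReal.HolderConjugate.toReal_of_ne_top hp hq).symm
      simp only [eLpNorm_eq_lintegral_rpow_enorm_toReal (ENNReal.HolderConjugate.ne_zero p q) hp,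
        eLpNorm_eq_lintegral_rpow_enorm_toReal (ENNReal.HolderConjugate.ne_zero q p) hq,
        enorm_eq_self]
      exact ⟨_, isNorming_holderExtremizer hrs hS (monotone_spanningSets μ) hU hfin hF⟩

end Lp

section Constructions

theorem isAssociatePair_dirac (T : Type*) [MeasurableSpace T] [MeasurableSingletonClass Y]
    (a : Y) :
    IsAssociatePair (Kernel.const T (Measure.dirac a)) (fun _ f ↦ f a) (fun _ f ↦ f a) where
  mono_ae t f g hfg := by
    rw [Kernel.const_apply, EventuallyLE, ae_dirac_eq] at hfg
    exact hfg
  const_mul _ _ _ _ := rfl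
  measurable_norm F hF := hF.comp measurable_prodMk_right
  measurable_dual F hF := hF.comp measurable_prodMk_right
  holder _ _ _ _ _ := by simp
  exists_isNorming _ _ := ⟨fun _ _ ↦ 1, fun _ ↦ measurable_const, fun _ _ ↦ le_rfl, by simp⟩

variable {κ : Kernel T Y} {N N' : T → (Y → ℝ≥0∞) → ℝ≥0∞}

theorem IsAssociatePair.weight (h : IsAssociatePair κ N N') {w w' : T → ℝ≥0∞} (hw : Measurable w)
    (hw' : Measurable w') (hww' : ∀ t, w t * w' t = 1) :
    IsAssociatePair κ (fun t f ↦ w t * N t f) (fun t f ↦ w' t * N' t f) where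
  mono_ae t f g hfg := mul_le_mul_right (h.mono_ae t f g hfg) _
  const_mul t c f hf := by rw [h.const_mul t c f hf, mul_left_comm]
  measurable_norm F hF := hw.mul (h.measurable_norm F hF)
  measurable_dual F hF := hw'.mul (h.measurable_dual F hF)
  holder t f g hf hg := by
    rw [mul_mul_mul_comm, mul_comm (w' t), hww', one_mul]
    exact h.holder t f g hf hg
  exists_isNorming F hF := by
    obtain ⟨G, hG⟩ := h.exists_isNorming F hF
    have measurable_fiber (k : ℕ) (t : T) : Measurable fun y ↦ G k (t, y) :=
      (hG.measurable k).comp measurable_prodMk_left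
    refine ⟨fun k z ↦ w' z.1 * G k z, fun k ↦ (hw'.comp measurable_fst).mul (hG.measurable k),
      fun k t ↦ ?_, fun t ↦ ?_⟩
    · rw [h.const_mul t (w' t) _ (measurable_fiber k t), ← mul_assoc, hww', one_mul]
      exact hG.norm_le_one k t
    · have pairing_eq (k : ℕ) : ∫⁻ y, F (t, y) * (w' t * G k (t, y)) ∂κ t
          = w' t * ∫⁻ y, F (t, y) * G k (t, y) ∂κ t := by
        simp only [mul_left_comm _ (w' t)]
        exact lintegral_const_mul _ ((hF.comp measurable_prodMk_left).mul (measurable_fiber k t))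
      simp only [pairing_eq, ← ENNReal.mul_iSup]
      gcongr
      exact hG.le_iSup t

theorem IsAssociatePair.map (h : IsAssociatePair κ N N') {s : Y → Z} {e : Z → Y}
    (hs : Measurable s) (he : Measurable e) (hes : ∀ t, ∀ᵐ y ∂κ t, e (s y) = y) :
    IsAssociatePair (κ.map s) (fun t f ↦ N t (f ∘ s)) (fun t f ↦ N' t (f ∘ s)) where
  mono_ae t f g hfg := by
    rw [Kernel.map_apply _ hs] at hfg
    exact h.mono_ae t _ _ (ae_of_ae_map hs.aemeasurable hfg)
  const_mul t c f hf := h.const_mul t c _ (hf.comp hs)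
  measurable_norm F hF := h.measurable_norm _ (hF.comp (measurable_id.prodMap hs))
  measurable_dual F hF := h.measurable_dual _ (hF.comp (measurable_id.prodMap hs))
  holder t f g hf hg := (Kernel.lintegral_map _ hs t (hf.mul hg)).trans_le <|
    h.holder t _ _ (hf.comp hs) (hg.comp hs)
  exists_isNorming F hF := by
    obtain ⟨G, hG⟩ := h.exists_isNorming _ (hF.comp (measurable_id.prodMap hs))
    have measurable_pullback (k : ℕ) : Measurable fun z : T × Z ↦ G k (z.1, e z.2) :=
      (hG.measurable k).comp (measurable_id.prodMap he)
    have pullback_ae_eq (k : ℕ) (t : T) :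
        (fun y ↦ G k (t, e (s y))) =ᵐ[κ t] fun y ↦ G k (t, y) :=
      (hes t).mono fun y hy ↦ by simp only [hy]
    refine ⟨fun k z ↦ G k (z.1, e z.2), measurable_pullback, fun k t ↦ ?_, fun t ↦ ?_⟩
    · exact (h.mono_ae t _ _ (pullback_ae_eq k t).le).trans (hG.norm_le_one k t)
    · refine (hG.le_iSup t).trans (iSup_mono fun k ↦ ?_)
      have pairing_eq : ∫⁻ z, F (t, z) * G k (t, e z) ∂(κ.map s) t
          = ∫⁻ y, F (t, s y) * G k (t, e (s y)) ∂κ t :=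
        Kernel.lintegral_map _ hs t ((hF.mul (measurable_pullback k)).comp measurable_prodMk_left)
      rw [pairing_eq]
      exact lintegral_mono_ae <|
        (pullback_ae_eq k t).mono fun y hy ↦ (congrArg (F (t, s y) * ·) hy).ge

end Constructions

section CompProd

/-- The mixed norm that takes the norm `N (t, x)` in the inner variable `y` and then the norm `M t`
in the outer variable `x`. -/
def mixedNorm (M : T → (X → ℝ≥0∞) → ℝ≥0∞) (N : T × X → (Y → ℝ≥0∞) → ℝ≥0∞) (t : T)
    (f : X × Y → ℝ≥0∞) : ℝ≥0∞ :=
  M t fun x ↦ N (t, x) fun y ↦ f (x, y)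

variable {κ : Kernel T X} {η : Kernel (T × X) Y} {M M' : T → (X → ℝ≥0∞) → ℝ≥0∞}
  {N N' : T × X → (Y → ℝ≥0∞) → ℝ≥0∞}

theorem lintegral_mul_mul_compProd [IsSFiniteKernel κ] [IsSFiniteKernel η] (t : T)
    {f g : X × Y → ℝ≥0∞} {u : X → ℝ≥0∞} (hf : Measurable f) (hu : Measurable u)
    (hg : Measurable g) : ∫⁻ z, f z * (u z.1 * g z) ∂(κ ⊗ₖ η) t
      = ∫⁻ x, u x * ∫⁻ y, f (x, y) * g (x, y) ∂η (t, x) ∂κ t := by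
  rw [Kernel.lintegral_compProd _ _ _ (by fun_prop)]
  refine lintegral_congr fun x ↦ ?_
  simp only [mul_left_comm _ (u x)]
  exact lintegral_const_mul _ ((hf.mul hg).comp measurable_prodMk_left)

theorem IsNorming.compProd [IsSFiniteKernel κ] [IsSFiniteKernel η] (hM : IsAssociatePair κ M M')
    (hN : IsAssociatePair η N N') {F : T × X × Y → ℝ≥0∞} (hF : Measurable F)
    {u : ℕ → T × X → ℝ≥0∞}
    (hu : IsNorming κ M M' (fun z ↦ N' z fun y ↦ F (z.1, z.2, y)) u)
    {G : ℕ → (T × X) × Y → ℝ≥0∞} (hG : IsNorming η N N' (fun z ↦ F (z.1.1, z.1.2, z.2)) G)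
    (hmono : ∀ z : T × X, Monotone fun k ↦ ∫⁻ y, F (z.1, z.2, y) * G k (z, y) ∂η z) :
    IsNorming (κ ⊗ₖ η) (mixedNorm M N) (mixedNorm M' N') F
      fun (i : ℕ × ℕ) z ↦ u i.1 (z.1, z.2.1) * G i.2 ((z.1, z.2.1), z.2.2) := by
  have measurable_fiber (k : ℕ) (z : T × X) : Measurable fun y ↦ G k (z, y) :=
    (hG.measurable k).comp measurable_prodMk_left
  have measurable_joint (i : ℕ × ℕ) :
      Measurable fun z : T × X × Y ↦ u i.1 (z.1, z.2.1) * G i.2 ((z.1, z.2.1), z.2.2) := by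
    have := hu.measurable i.1
    have := hG.measurable i.2
    fun_prop
  let inner (k : ℕ) (z : T × X) : ℝ≥0∞ := ∫⁻ y, F (z.1, z.2, y) * G k (z, y) ∂η z
  have measurable_inner (k : ℕ) : Measurable (inner k) := by
    have := hG.measurable k
    exact Measurable.lintegral_kernel_prod_right'
      (f := fun z : (T × X) × Y ↦ F (z.1.1, z.1.2, z.2) * G k z) (by fun_prop)
  have pairing_eq (t : T) (i : ℕ × ℕ) :
      ∫⁻ z, F (t, z) * (u i.1 (t, z.1) * G i.2 ((t, z.1), z.2)) ∂(κ ⊗ₖ η) t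
        = ∫⁻ x, u i.1 (t, x) * inner i.2 (t, x) ∂κ t := by
    have := hG.measurable i.2
    exact lintegral_mul_mul_compProd t (f := fun z ↦ F (t, z)) (u := fun x ↦ u i.1 (t, x))
      (g := fun z ↦ G i.2 ((t, z.1), z.2)) (by fun_prop)
      ((hu.measurable i.1).comp measurable_prodMk_left) (by fun_prop)
  refine ⟨measurable_joint, fun i t ↦ ?_, fun t ↦ ?_⟩
  · refine (hM.mono_ae t _ _ (ae_of_all _ fun x ↦ ?_)).trans (hu.norm_le_one i.1 t)
    rw [hN.const_mul (t, x) (u i.1 (t, x)) _ (measurable_fiber i.2 (t, x))]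
    exact mul_le_of_le_one_right' (hG.norm_le_one i.2 (t, x))
  · simp only [pairing_eq, iSup_prod]
    refine (hu.le_iSup t).trans (iSup_mono fun i ↦ ?_)
    have monotone_pairing : Monotone fun k x ↦ u i (t, x) * inner k (t, x) :=
      fun _ _ hkl x ↦ mul_le_mul_right (hmono (t, x) hkl) _
    have measurable_pairing (k : ℕ) : Measurable fun x ↦ u i (t, x) * inner k (t, x) :=
      ((hu.measurable i).mul (measurable_inner k)).comp measurable_prodMk_left
    rw [← lintegral_iSup measurable_pairing monotone_pairing]
    refine lintegral_mono fun x ↦ ?_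
    rw [← ENNReal.mul_iSup, mul_comm]
    gcongr
    exact hG.le_iSup (t, x)

theorem IsAssociatePair.compProd [IsSFiniteKernel κ] [IsSFiniteKernel η]
    (hM : IsAssociatePair κ M M') (hN : IsAssociatePair η N N') :
    IsAssociatePair (κ ⊗ₖ η) (mixedNorm M N) (mixedNorm M' N') where
  mono_ae t f g hfg := hM.mono_ae t _ _ <|
    (Kernel.ae_ae_of_ae_compProd hfg).mono fun x hx ↦ hN.mono_ae (t, x) _ _ hx
  const_mul t c f hf := by
    have measurable_inner : Measurable fun x ↦ N (t, x) fun y ↦ f (x, y) :=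
      (hN.measurable_norm (fun z ↦ f (z.1.2, z.2)) (by fun_prop)).comp measurable_prodMk_left
    refine .trans ?_ (hM.const_mul t c _ measurable_inner)
    exact congrArg (M t) <| funext fun x ↦
      hN.const_mul (t, x) c _ (hf.comp measurable_prodMk_left)
  measurable_norm F hF := hM.measurable_norm _ <|
    hN.measurable_norm (fun z ↦ F (z.1.1, z.1.2, z.2)) (by fun_prop)
  measurable_dual F hF := hM.measurable_dual _ <|
    hN.measurable_dual (fun z ↦ F (z.1.1, z.1.2, z.2)) (by fun_prop)
  holder t f g hf hg := by
    have measurable_inner_norm : Measurable fun x ↦ N (t, x) fun y ↦ g (x, y) :=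
      (hN.measurable_norm (fun z ↦ g (z.1.2, z.2)) (by fun_prop)).comp measurable_prodMk_left
    have measurable_inner_dual : Measurable fun x ↦ N' (t, x) fun y ↦ f (x, y) :=
      (hN.measurable_dual (fun z ↦ f (z.1.2, z.2)) (by fun_prop)).comp measurable_prodMk_left
    calc ∫⁻ z, f z * g z ∂(κ ⊗ₖ η) t
        = ∫⁻ x, ∫⁻ y, f (x, y) * g (x, y) ∂η (t, x) ∂κ t :=
          Kernel.lintegral_compProd _ _ _ (hf.mul hg)
      _ ≤ ∫⁻ x, (N' (t, x) fun y ↦ f (x, y)) * (N (t, x) fun y ↦ g (x, y)) ∂κ t :=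
          lintegral_mono fun x ↦ hN.holder (t, x) _ _ (hf.comp measurable_prodMk_left)
            (hg.comp measurable_prodMk_left)
      _ ≤ mixedNorm M' N' t f * mixedNorm M N t g :=
          hM.holder t _ _ measurable_inner_dual measurable_inner_norm
  exists_isNorming F hF := by
    have hF' : Measurable fun z : (T × X) × Y ↦ F (z.1.1, z.1.2, z.2) := by fun_prop
    obtain ⟨G₀, hG₀⟩ := hN.exists_isNorming _ hF'
    obtain ⟨G, hG, hmono⟩ := hG₀.exists_monotone hF'
    obtain ⟨u, hu⟩ := hM.exists_isNorming _ (hN.measurable_dual _ hF')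
    exact (IsNorming.compProd hM hN hF hu hG hmono).exists_nat

end CompProd

section Duality

variable {𝕜 : Type*} [RCLike 𝕜]

/-- The associate (Köthe dual) norm, over the scalar field `𝕜`, of a function norm `N`. -/
def associateNorm (μ : Measure Y) (N : (Y → ℝ≥0∞) → ℝ≥0∞) (f : Y → 𝕜) : ℝ≥0∞ :=
  ⨆ (g : Y → 𝕜) (_ : Measurable g) (_ : N (fun y ↦ ‖g y‖ₑ) = 1), ∫⁻ y, ‖f y * g y‖ₑ ∂μ

theorem exists_measurable_enorm_eq (𝕜 : Type*) [RCLike 𝕜] {g : Y → ℝ≥0∞} (hg : Measurable g)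
    (hfin : ∀ y, g y ≠ ∞) : ∃ γ : Y → 𝕜, Measurable γ ∧ ∀ y, ‖γ y‖ₑ = g y := by
  refine ⟨fun y ↦ ((g y).toReal : 𝕜), RCLike.measurable_ofReal.comp hg.ennreal_toReal,
    fun y ↦ ?_⟩
  rw [← ofReal_norm, RCLike.norm_ofReal, abs_of_nonneg ENNReal.toReal_nonneg,
    ENNReal.ofReal_toReal (hfin y)]

namespace IsAssociatePair

variable {κ : Kernel T Y} {N N' : T → (Y → ℝ≥0∞) → ℝ≥0∞}

theorem lintegral_enorm_mul_le_associateNorm (h : IsAssociatePair κ N N') (t : T) {f : Y → 𝕜}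
    (hf : Measurable f) {g : Y → ℝ≥0∞} (hg : Measurable g) (hfin : ∀ y, g y ≠ ∞)
    (hg1 : N t g ≤ 1) : ∫⁻ y, ‖f y‖ₑ * g y ∂κ t ≤ associateNorm (κ t) (N t) f := by
  rcases eq_or_ne (N t g) 0 with h0 | h0
  · refine (h.holder t _ g hf.enorm hg).trans ?_
    rw [h0, mul_zero]
    exact zero_le
  have scaled_ne_top (y : Y) : (N t g)⁻¹ * g y ≠ ∞ :=
    ENNReal.mul_ne_top (ENNReal.inv_ne_top.2 h0) (hfin y)
  obtain ⟨γ, hγ, hγg⟩ := exists_measurable_enorm_eq 𝕜 (hg.const_mul (N t g)⁻¹) scaled_ne_top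
  have norm_eq_one : N t (fun y ↦ ‖γ y‖ₑ) = 1 := by
    simp only [hγg]
    rw [h.const_mul t _ g hg, ENNReal.inv_mul_cancel h0 (ne_top_of_le_ne_top one_ne_top hg1)]
  calc ∫⁻ y, ‖f y‖ₑ * g y ∂κ t ≤ ∫⁻ y, ‖f y * γ y‖ₑ ∂κ t := by
        refine lintegral_mono fun y ↦ ?_
        rw [enorm_mul, hγg]
        gcongr
        exact le_mul_of_one_le_left' (ENNReal.one_le_inv.2 hg1)
    _ ≤ associateNorm (κ t) (N t) f := le_iSup₂_of_le γ hγ (le_iSup_of_le norm_eq_one le_rfl)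

theorem associateNorm_le (h : IsAssociatePair κ N N') (t : T) {f : Y → 𝕜} (hf : Measurable f) :
    associateNorm (κ t) (N t) f ≤ N' t fun y ↦ ‖f y‖ₑ := by
  refine iSup₂_le fun g hg ↦ iSup_le fun hg1 ↦ ?_
  calc ∫⁻ y, ‖f y * g y‖ₑ ∂κ t = ∫⁻ y, ‖f y‖ₑ * ‖g y‖ₑ ∂κ t := by simp only [enorm_mul]
    _ ≤ (N' t fun y ↦ ‖f y‖ₑ) * N t fun y ↦ ‖g y‖ₑ := h.holder t _ _ hf.enorm hg.enorm
    _ = N' t fun y ↦ ‖f y‖ₑ := by rw [hg1, mul_one]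

theorem associateNorm_eq (h : IsAssociatePair κ N N') (t : T) {f : Y → 𝕜} (hf : Measurable f) :
    associateNorm (κ t) (N t) f = N' t fun y ↦ ‖f y‖ₑ := by
  refine le_antisymm (h.associateNorm_le t hf) ?_
  obtain ⟨G, hG⟩ := h.exists_isNorming (fun z ↦ ‖f z.2‖ₑ) (hf.comp measurable_snd).enorm
  refine (hG.le_iSup t).trans (iSup_le fun k ↦ ?_)
  let g := cutoff (fun _ ↦ Set.univ) fun y ↦ G k (t, y)
  have measurable_g (m : ℕ) : Measurable (g m) := measurable_cutoff (fun _ ↦ .univ)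
    ((hG.measurable k).comp measurable_prodMk_left) m
  have monotone_g : Monotone fun m y ↦ ‖f y‖ₑ * g m y :=
    fun _ _ hab y ↦ mul_le_mul_right (monotone_cutoff monotone_const hab y) _
  have iSup_g (y : Y) : ⨆ m, g m y = G k (t, y) :=
    iSup_cutoff monotone_const (Set.iUnion_const _) y
  have measurable_pairing (m : ℕ) : Measurable fun y ↦ ‖f y‖ₑ * g m y :=
    hf.enorm.mul (measurable_g m)
  simp only [← iSup_g, ENNReal.mul_iSup]
  rw [lintegral_iSup measurable_pairing monotone_g]
  exact iSup_le fun m ↦ h.lintegral_enorm_mul_le_associateNorm t hf (measurable_g m)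
    (fun y ↦ ne_top_of_le_ne_top (ENNReal.natCast_ne_top m) (cutoff_le_natCast m y))
    ((h.mono_ae t _ _ (ae_of_all _ (cutoff_le m))).trans (hG.norm_le_one k t))

end IsAssociatePair

end Duality

section HerzNorm

/-- The index `k` of the dyadic ring `herzRing k` containing `x ≠ 0`. -/
def herzRingIndex (x : ℝ) : ℤ :=
  Int.log 2 |x| + 1

theorem mem_herzRing_iff {k : ℤ} {x : ℝ} : x ∈ herzRing k ↔ x ≠ 0 ∧ herzRingIndex x = k := by
  have mem_iff_abs : x ∈ herzRing k ↔ |x| < 2 ^ k ∧ (2 : ℝ) ^ (k - 1) ≤ |x| := by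
    simp only [herzRing, Set.mem_sdiff, Set.mem_Ioo, ← abs_lt, not_lt]
  rw [mem_iff_abs]
  rcases eq_or_ne x 0 with rfl | hx
  · have : (0 : ℝ) < 2 ^ (k - 1) := by positivity
    simp [this.not_ge]
  have hpos : 0 < |x| := abs_pos.2 hx
  have upper : |x| < 2 ^ k ↔ Int.log 2 |x| < k := by
    exact_mod_cast Int.lt_zpow_iff_log_lt (b := 2) one_lt_two hpos
  have lower : (2 : ℝ) ^ (k - 1) ≤ |x| ↔ k - 1 ≤ Int.log 2 |x| := by
    exact_mod_cast Int.zpow_le_iff_le_log (b := 2) one_lt_two hpos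
  rw [upper, lower, herzRingIndex]
  constructor
  · rintro ⟨h1, h2⟩; exact ⟨hx, by lia⟩
  · rintro ⟨-, h⟩; lia

theorem measurableSet_herzRing (k : ℤ) : MeasurableSet (herzRing k) :=
  measurableSet_Ioo.diff measurableSet_Ioo

theorem measurable_herzRingIndex : Measurable herzRingIndex := by
  refine measurable_to_countable' fun k ↦ ?_
  have preimage_eq : herzRingIndex ⁻¹' {k} = herzRing k ∪ ({0} ∩ herzRingIndex ⁻¹' {k}) := by
    ext x
    simp only [Set.mem_preimage, Set.mem_singleton_iff, Set.mem_union, mem_herzRing_iff,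
      Set.mem_inter_iff]
    tauto
  rw [preimage_eq]
  exact (measurableSet_herzRing k).union
    ((Set.countable_singleton 0).mono Set.inter_subset_left).measurableSet

theorem sum_restrict_herzRing :
    Measure.sum (fun k ↦ volume.restrict (herzRing k)) = (volume : Measure ℝ) := by
  have disjoint_rings : Pairwise (Function.onFun Disjoint herzRing) := fun i j hij ↦
    Set.disjoint_left.2 fun x hi hj ↦
      hij ((mem_herzRing_iff.1 hi).2.symm.trans (mem_herzRing_iff.1 hj).2)
  rw [← Measure.restrict_iUnion disjoint_rings measurableSet_herzRing]
  refine Measure.restrict_eq_self_of_ae_mem ?_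
  filter_upwards [Measure.ae_ne volume (0 : ℝ)] with x hx
  exact Set.mem_iUnion.2 ⟨_, mem_herzRing_iff.2 ⟨hx, rfl⟩⟩

theorem isSFiniteKernel_of_countable [Countable X] [MeasurableSingletonClass X] (κ : Kernel X Y)
    [∀ x, SFinite (κ x)] : IsSFiniteKernel κ := by
  classical
  have eq_sum : κ = Kernel.sum fun i ↦
      Kernel.piecewise (MeasurableSet.singleton i) (Kernel.const X (κ i)) 0 := by
    ext x s hs
    rw [Kernel.sum_apply' _ _ hs, tsum_eq_single x]
    · simp [Kernel.piecewise_apply]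
    · intro i hi
      simp [Kernel.piecewise_apply, hi.symm]
  rw [eq_sum]
  infer_instance

/-- The restrictions of Lebesgue measure to the dyadic rings, as a kernel that ignores the
parameter in `T`. -/
def herzRingKernel (T : Type*) [MeasurableSpace T] : Kernel (T × ℤ) ℝ :=
  Kernel.prodMkLeft T (Kernel.ofFunOfCountable fun k ↦ volume.restrict (herzRing k))

instance : IsSFiniteKernel (herzRingKernel T) := by
  have (k : ℤ) : SFinite ((Kernel.ofFunOfCountable
      fun k ↦ (volume : Measure ℝ).restrict (herzRing k)) k) :=
    inferInstanceAs (SFinite (volume.restrict (herzRing k)))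
  have := isSFiniteKernel_of_countable
    (Kernel.ofFunOfCountable fun k ↦ (volume : Measure ℝ).restrict (herzRing k))
  exact Kernel.IsSFiniteKernel.prodMkLeft _

theorem herzRingKernel_apply (z : T × ℤ) :
    herzRingKernel T z = volume.restrict (herzRing z.2) :=
  rfl

theorem map_snd_const_count_compProd_herzRingKernel :
    (Kernel.const T Measure.count ⊗ₖ herzRingKernel T).map Prod.snd = Kernel.const T volume := by
  ext t s hs
  rw [Kernel.map_apply' _ measurable_snd _ hs, Kernel.compProd_apply (measurable_snd hs),
    Kernel.const_apply, Kernel.const_apply, lintegral_count]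
  conv_rhs => rw [← sum_restrict_herzRing, Measure.sum_apply _ hs]
  rfl

/-- The weight `2 ^ (k * α)` in the Herz norm. -/
def herzWeight (α : ℝ) (k : ℤ) : ℝ≥0∞ :=
  ENNReal.ofReal ((2 : ℝ) ^ ((k : ℝ) * α))

theorem herzWeight_mul_herzWeight_neg (α : ℝ) (k : ℤ) : herzWeight α k * herzWeight (-α) k = 1 := by
  rw [herzWeight, herzWeight, ← ENNReal.ofReal_mul (by positivity), mul_neg,
    ← Real.rpow_add two_pos, add_neg_cancel, Real.rpow_zero, ENNReal.ofReal_one]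

theorem lqNormOn_eq_eLpNorm {q : ℝ≥0∞} (hq : q ≠ 0) {s : Set ℝ} (hs : MeasurableSet s)
    (g : ℝ → ℝ≥0∞) : lqNormOn q s g = eLpNorm g q (volume.restrict s) := by
  rw [lqNormOn]
  split_ifs with h
  · rw [h, eLpNorm_exponent_top, eLpNormEssSup_eq_essSup_enorm]
    exact ENNReal.essSup_indicator_eq_essSup_restrict hs
  · rw [eLpNorm_eq_lintegral_rpow_enorm_toReal hq h]
    rfl

theorem lpZNorm_eq_eLpNorm {p : ℝ≥0∞} (hp : p ≠ 0) (a : ℤ → ℝ≥0∞) :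
    lpZNorm p a = eLpNorm a p Measure.count := by
  rw [lpZNorm]
  split_ifs with h
  · rw [h, eLpNorm_exponent_top, eLpNormEssSup_eq_essSup_enorm, essSup_count]
    rfl
  · rw [eLpNorm_eq_lintegral_rpow_enorm_toReal hp h, lintegral_count]
    rfl

theorem herzNorm1_eq_mixedNorm (T : Type*) [MeasurableSpace T] (α : ℝ) {p q : ℝ≥0∞} (hp : p ≠ 0)
    (hq : q ≠ 0) : (fun _ : T ↦ herzNorm1 α p q) = fun t f ↦
      mixedNorm (fun _ a ↦ eLpNorm a p Measure.count)
        (fun z g ↦ herzWeight α z.2 * eLpNorm g q (herzRingKernel T z)) t (f ∘ Prod.snd) := by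
  funext t f
  simp only [herzNorm1, lpZNorm_eq_eLpNorm hp, lqNormOn_eq_eLpNorm hq (measurableSet_herzRing _)]
  rfl

theorem isAssociatePair_herzNorm1 (T : Type*) [MeasurableSpace T] (α : ℝ) (p q p' q' : ℝ≥0∞)
    [ENNReal.HolderConjugate p p'] [ENNReal.HolderConjugate q q'] :
    IsAssociatePair (Kernel.const T volume) (fun _ ↦ herzNorm1 α p q)
      (fun _ ↦ herzNorm1 (-α) p' q') := by
  have measurable_weight (α : ℝ) : Measurable fun z : T × ℤ ↦ herzWeight α z.2 :=
    (measurable_of_countable (herzWeight α)).comp measurable_snd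
  have rings : IsAssociatePair (herzRingKernel T)
      (fun z f ↦ herzWeight α z.2 * eLpNorm f q (herzRingKernel T z))
      (fun z f ↦ herzWeight (-α) z.2 * eLpNorm f q' (herzRingKernel T z)) :=
    (isAssociatePair_eLpNorm (fun _ ↦ Measure.restrict_le_self) q q').weight
      (measurable_weight α) (measurable_weight (-α))
      fun z ↦ herzWeight_mul_herzWeight_neg α z.2
  have sequences : IsAssociatePair (Kernel.const T (Measure.count : Measure ℤ))
      (fun _ a ↦ eLpNorm a p Measure.count) (fun _ a ↦ eLpNorm a p' Measure.count) :=
    isAssociatePair_eLpNorm (μ := Measure.count) (fun _ ↦ le_rfl) p p'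
  have index_ae (t : T) : ∀ᵐ z ∂(Kernel.const T Measure.count ⊗ₖ herzRingKernel T) t,
      (herzRingIndex z.2, z.2) = z := by
    refine Kernel.ae_compProd_of_ae_ae ?_ (ae_of_all _ fun k ↦ ?_)
    · exact measurableSet_eq_fun
        ((measurable_herzRingIndex.comp measurable_snd).prodMk measurable_snd) measurable_id
    · rw [herzRingKernel_apply]
      filter_upwards [ae_restrict_mem (measurableSet_herzRing k)] with x hx
      rw [(mem_herzRing_iff.1 hx).2]
  rw [herzNorm1_eq_mixedNorm T α (ENNReal.HolderConjugate.ne_zero p p')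
      (ENNReal.HolderConjugate.ne_zero q q'),
    herzNorm1_eq_mixedNorm T (-α) (ENNReal.HolderConjugate.ne_zero p' p)
      (ENNReal.HolderConjugate.ne_zero q' q),
    ← map_snd_const_count_compProd_herzRingKernel]
  exact (sequences.compProd rings).map measurable_snd
    (measurable_herzRingIndex.prodMk measurable_id) index_ae

end HerzNorm

section MixedHerzNorm

theorem const_compProd_const (μ : Measure X) (ν : Measure Y) [SFinite μ] [SFinite ν] :
    Kernel.const T μ ⊗ₖ Kernel.const (T × X) ν = Kernel.const T (μ.prod ν) := by
  ext t s hs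
  rw [Kernel.compProd_apply hs, Kernel.const_apply, Kernel.const_apply, Measure.prod_apply hs]
  simp only [Kernel.const_apply]

theorem measurePreserving_snoc (n : ℕ) :
    MeasurePreserving fun z : ℝ × (Fin n → ℝ) ↦ (Fin.snoc z.2 z.1 : Fin (n + 1) → ℝ) := by
  have insert_last : (fun z : ℝ × (Fin n → ℝ) ↦ (Fin.snoc z.2 z.1 : Fin (n + 1) → ℝ)) =
      (MeasurableEquiv.piFinSuccAbove (fun _ ↦ ℝ) (Fin.last n)).symm :=
    funext fun z ↦ (Fin.insertNth_last' z.1 z.2).symm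
  rw [insert_last]
  exact (volume_preserving_piFinSuccAbove (fun _ ↦ ℝ) (Fin.last n)).symm

theorem isAssociatePair_mixedHerzNormE (n : ℕ) (T : Type*) [MeasurableSpace T] (α : Fin n → ℝ)
    (p q p' q' : Fin n → ℝ≥0∞) (hp : ∀ i, (p i).HolderConjugate (p' i))
    (hq : ∀ i, (q i).HolderConjugate (q' i)) :
    IsAssociatePair (Kernel.const T volume) (fun _ ↦ mixedHerzNormE n α p q)
      (fun _ ↦ mixedHerzNormE n (-α) p' q') := by
  induction n generalizing T with
  | zero =>
    rw [volume_pi, Measure.pi_of_empty]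
    exact isAssociatePair_dirac T _
  | succ n ih =>
    have := hp (Fin.last n)
    have := hq (Fin.last n)
    have outer := isAssociatePair_herzNorm1 T (α (Fin.last n)) (p (Fin.last n)) (q (Fin.last n))
      (p' (Fin.last n)) (q' (Fin.last n))
    have inner := ih (T × ℝ) (Fin.init α) (Fin.init p) (Fin.init q) (Fin.init p') (Fin.init q')
      (fun i ↦ hp i.castSucc) fun i ↦ hq i.castSucc
    have split_last : Measurable fun y : Fin (n + 1) → ℝ ↦ (y (Fin.last n), Fin.init y) :=
      (measurable_pi_apply _).prodMk (measurable_pi_lambda _ fun _ ↦ measurable_pi_apply _)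
    have map_volume : (Kernel.const T volume ⊗ₖ Kernel.const (T × ℝ) volume).map
        (fun z : ℝ × (Fin n → ℝ) ↦ (Fin.snoc z.2 z.1 : Fin (n + 1) → ℝ)) =
          Kernel.const T volume := by
      rw [const_compProd_const, Kernel.map_const _ (measurePreserving_snoc n).measurable]
      exact congrArg _ (measurePreserving_snoc n).map_eq
    have joined := (outer.compProd inner).map (measurePreserving_snoc n).measurable split_last
      fun t ↦ ae_of_all _ fun z ↦ by simp only [Fin.snoc_last, Fin.init_snoc]
    rw [map_volume] at joined
    exact joined

end MixedHerzNorm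

end

/-- the associate space of `Ė^{α,p}_q(ℝⁿ)` is `Ė^{-α,p'}_{q'}(ℝⁿ)`. -/
theorem mixedHerz_assoc (n : ℕ) (α : Fin n → ℝ) (p q p' q' : Fin n → ℝ≥0∞)
    (hp : ∀ i, 1 ≤ p i) (hq : ∀ i, 1 ≤ q i)
    (hp' : ∀ i, 1 / p i + 1 / p' i = 1) (hq' : ∀ i, 1 / q i + 1 / q' i = 1)
    (f : (Fin n → ℝ) → ℂ) (hf : Measurable f) :
    (herzAssocNormC n α p q f ≠ ∞ ↔ herzNormC n (-α) p' q' f ≠ ∞) ∧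
    herzAssocNormC n α p q f = herzNormC n (-α) p' q' f := by
  have hp_conj (i : Fin n) : (p i).HolderConjugate (p' i) :=
    ENNReal.holderConjugate_iff.2 (by simpa only [one_div] using hp' i)
  have hq_conj (i : Fin n) : (q i).HolderConjugate (q' i) :=
    ENNReal.holderConjugate_iff.2 (by simpa only [one_div] using hq' i)
  have norm_eq : herzAssocNormC n α p q f = herzNormC n (-α) p' q' f :=
    (isAssociatePair_mixedHerzNormE n Unit α p q p' q' hp_conj hq_conj).associateNorm_eq () hf
  exact ⟨by rw [norm_eq], norm_eq⟩
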